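/- For the family 𝔤₁₇(α, a, w₁, w₂) with α ≠ 0 and a ≠ 0, the structure J is integrable, i.e. the Nijenhuis tensor N(E,F) = 0 for all E, F ∈ 𝔤, if and only if w₁ = 0 and w₂ = 0. In particular, the pair of conditions (α² − a²)w₁ = 2aα w₂ and (α² − a²)w₂ = −2aα w₁ forces w₁ = w₂ = 0. -/

import Mathlib

/-!
The Nijenhuis tensor of a complex structure `J` and an alternating bracket is alternating and
conjugate-linear in each argument, `N(JE, F) = -J N(E, F)`, so on a space spanned by `X, JX, Z, JZ`
it is determined by `N(X, Z)`. For `𝔤₁₇` this is a combination of `Z` and `W`, with coefficients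
`α⁻² Im ζ` and `-α⁻² Re ζ` where `ζ = (α + ia)² (w₁ + i w₂)`. As `α + ia ≠ 0`, it vanishes only
for `w₁ + i w₂ = 0`.
-/

noncomputable section

/-- The bilinear antisymmetric bracket on ℝ⁴ determined by the structure constants. -/
def bk (α a w₁ w₂ : ℝ) (E F : Fin 4 → ℝ) : Fin 4 → ℝ :=
  (E 0 * F 1 - E 1 * F 0) • (![0, 0, 0, 0] : Fin 4 → ℝ) +
  (E 0 * F 2 - E 2 * F 0) • (![-α, 0, a * w₁ / α, -w₁] : Fin 4 → ℝ) +
  (E 0 * F 3 - E 3 * F 0) • (![-a, 0, a ^ 2 * w₁ / α ^ 2, -(a * w₁ / α)] : Fin 4 → ℝ) +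
  (E 1 * F 2 - E 2 * F 1) • (![0, -α, a * w₂ / α, -w₂] : Fin 4 → ℝ) +
  (E 1 * F 3 - E 3 * F 1) • (![0, -a, a ^ 2 * w₂ / α ^ 2, -(a * w₂ / α)] : Fin 4 → ℝ) +
  (E 2 * F 3 - E 3 * F 2) • (![0, 0, 0, 0] : Fin 4 → ℝ)

/-- The almost Hermitian structure J with J(X)=Y, J(Y)=-X, J(Z)=W, J(W)=-Z. -/
def Jm (E : Fin 4 → ℝ) : Fin 4 → ℝ := ![-E 1, E 0, -E 3, E 2]

/-- The Nijenhuis tensor of J. -/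
def NT (α a w₁ w₂ : ℝ) (E F : Fin 4 → ℝ) : Fin 4 → ℝ :=
  bk α a w₁ w₂ E F + Jm (bk α a w₁ w₂ (Jm E) F) + Jm (bk α a w₁ w₂ E (Jm F)) -
    bk α a w₁ w₂ (Jm E) (Jm F)

section Nijenhuis

variable {R V : Type*} [CommRing R] [AddCommGroup V] [Module R V]

/-- The Nijenhuis tensor of an endomorphism `J` with respect to a bilinear bracket `B`, with the
sign convention of `NT`. Neither the Jacobi identity for `B` nor `J² = -1` is built in. -/
def nijenhuis (B : V →ₗ[R] V →ₗ[R] V) (J : V →ₗ[R] V) : V →ₗ[R] V →ₗ[R] V :=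
  B + (B.comp J).compr₂ J + (B.compl₂ J).compr₂ J - B.compl₁₂ J J

lemma nijenhuis_apply (B : V →ₗ[R] V →ₗ[R] V) (J : V →ₗ[R] V) (x y : V) :
    nijenhuis B J x y = B x y + J (B (J x) y) + J (B x (J y)) - B (J x) (J y) :=
  rfl

variable {B : V →ₗ[R] V →ₗ[R] V} {J : V →ₗ[R] V}

lemma nijenhuis_isAlt (hB : B.IsAlt) : (nijenhuis B J).IsAlt := by
  intro x
  rw [nijenhuis_apply, hB x, hB (J x), ← hB.neg x (J x), map_neg]
  abel

lemma nijenhuis_apply_left (hJ : ∀ v, J (J v) = -v) (x y : V) :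
    nijenhuis B J (J x) y = -J (nijenhuis B J x y) := by
  simp only [nijenhuis_apply, hJ, map_add, map_sub, map_neg, LinearMap.neg_apply]
  abel

lemma nijenhuis_apply_right (hJ : ∀ v, J (J v) = -v) (x y : V) :
    nijenhuis B J x (J y) = -J (nijenhuis B J x y) := by
  simp only [nijenhuis_apply, hJ, map_add, map_sub, map_neg]
  abel

lemma nijenhuis_eq_zero_of_span (hJ : ∀ v, J (J v) = -v) {S : Set V}
    (hS : Submodule.span R (S ∪ J '' S) = ⊤) (h : ∀ x ∈ S, ∀ y ∈ S, nijenhuis B J x y = 0) :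
    nijenhuis B J = 0 := by
  have eq_zero_of_mem : ∀ x ∈ S, nijenhuis B J x = 0 := by
    refine fun x hx ↦ LinearMap.ext_on hS ?_
    rintro _ (hy | ⟨y, hy, rfl⟩)
    · exact h x hx _ hy
    · simp [nijenhuis_apply_right hJ, h x hx y hy]
  refine LinearMap.ext_on hS ?_
  rintro _ (hx | ⟨x, hx, rfl⟩)
  · exact eq_zero_of_mem _ hx
  · ext y
    simp [nijenhuis_apply_left hJ, eq_zero_of_mem x hx]

lemma nijenhuis_eq_zero_iff_of_span_pair (hB : B.IsAlt) (hJ : ∀ v, J (J v) = -v) {x z : V}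
    (hxz : Submodule.span R ({x, z} ∪ J '' {x, z}) = ⊤) :
    nijenhuis B J = 0 ↔ nijenhuis B J x z = 0 := by
  have hN : (nijenhuis B J).IsAlt := nijenhuis_isAlt hB
  refine ⟨fun h ↦ by simp [h], fun h ↦ nijenhuis_eq_zero_of_span hJ hxz ?_⟩
  rintro _ (rfl | rfl) _ (rfl | rfl)
  exacts [hN _, h, hN.eq_iff.mp h, hN _]

end Nijenhuis

lemma complex_sq_mul_eq_zero_iff {α a w₁ w₂ : ℝ} :
    (⟨α, a⟩ : ℂ) ^ 2 * ⟨w₁, w₂⟩ = 0 ↔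
      (α ^ 2 - a ^ 2) * w₁ = 2 * a * α * w₂ ∧ (α ^ 2 - a ^ 2) * w₂ = -(2 * a * α * w₁) := by
  simp only [Complex.ext_iff, pow_two, Complex.mul_re, Complex.mul_im, Complex.zero_re,
    Complex.zero_im]
  refine and_congr ?_ ?_ <;> constructor <;> intro h <;> linear_combination h

lemma sq_sub_sq_mul_eq_iff {α a w₁ w₂ : ℝ} (hα : α ≠ 0) :
    ((α ^ 2 - a ^ 2) * w₁ = 2 * a * α * w₂ ∧ (α ^ 2 - a ^ 2) * w₂ = -(2 * a * α * w₁)) ↔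
      w₁ = 0 ∧ w₂ = 0 := by
  have hz : (⟨α, a⟩ : ℂ) ≠ 0 := fun h ↦ hα (congrArg Complex.re h)
  rw [← complex_sq_mul_eq_zero_iff, mul_eq_zero_iff_left (pow_ne_zero 2 hz), Complex.ext_iff]
  rfl

/-- The bracket `bk` of `𝔤₁₇` as a bilinear map. -/
def bkBilin (α a w₁ w₂ : ℝ) : (Fin 4 → ℝ) →ₗ[ℝ] (Fin 4 → ℝ) →ₗ[ℝ] (Fin 4 → ℝ) :=
  LinearMap.mk₂ ℝ (bk α a w₁ w₂)
    (fun _ _ _ ↦ by simp only [bk, Pi.add_apply]; module)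
    (fun _ _ _ ↦ by simp only [bk, Pi.smul_apply, smul_eq_mul]; module)
    (fun _ _ _ ↦ by simp only [bk, Pi.add_apply]; module)
    (fun _ _ _ ↦ by simp only [bk, Pi.smul_apply, smul_eq_mul]; module)

/-- The almost complex structure `Jm` as a linear map. -/
def JmLin : (Fin 4 → ℝ) →ₗ[ℝ] (Fin 4 → ℝ) where
  toFun := Jm
  map_add' E F := by ext i; fin_cases i <;> simp [Jm, add_comm]
  map_smul' c E := by ext i; fin_cases i <;> simp [Jm]

lemma bkBilin_isAlt (α a w₁ w₂ : ℝ) : (bkBilin α a w₁ w₂).IsAlt := by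
  intro E
  simp only [bkBilin, LinearMap.mk₂_apply, bk]
  module

lemma JmLin_JmLin (E : Fin 4 → ℝ) : JmLin (JmLin E) = -E := by
  ext i
  fin_cases i <;> simp [JmLin, Jm]

lemma NT_eq_nijenhuis (α a w₁ w₂ : ℝ) (E F : Fin 4 → ℝ) :
    NT α a w₁ w₂ E F = nijenhuis (bkBilin α a w₁ w₂) JmLin E F :=
  rfl

lemma span_X_Z_union_image_JmLin_eq_top :
    Submodule.span ℝ ({![1, 0, 0, 0], ![0, 0, 1, 0]} ∪
      JmLin '' {![1, 0, 0, 0], ![0, 0, 1, 0]}) = ⊤ := by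
  refine eq_top_iff.mpr fun E _ ↦ ?_
  have hE : E = E 0 • ![1, 0, 0, 0] + E 2 • ![0, 0, 1, 0] +
      (E 1 • JmLin ![1, 0, 0, 0] + E 3 • JmLin ![0, 0, 1, 0]) := by
    ext i
    fin_cases i <;> simp [JmLin, Jm]
  rw [hE, Submodule.span_union, Set.image_pair]
  exact Submodule.add_mem_sup (Submodule.mem_span_pair.mpr ⟨_, _, rfl⟩)
    (Submodule.mem_span_pair.mpr ⟨_, _, rfl⟩)

lemma forall_NT_eq_zero_iff_NT_X_Z_eq_zero (α a w₁ w₂ : ℝ) :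
    (∀ E F : Fin 4 → ℝ, NT α a w₁ w₂ E F = 0) ↔
      NT α a w₁ w₂ ![1, 0, 0, 0] ![0, 0, 1, 0] = 0 := by
  simp only [NT_eq_nijenhuis]
  rw [← nijenhuis_eq_zero_iff_of_span_pair (bkBilin_isAlt α a w₁ w₂) JmLin_JmLin
    span_X_Z_union_image_JmLin_eq_top, LinearMap.ext_iff₂]
  rfl

lemma NT_X_Z {α : ℝ} (hα : α ≠ 0) (a w₁ w₂ : ℝ) :
    NT α a w₁ w₂ ![1, 0, 0, 0] ![0, 0, 1, 0] =
      ![0, 0, ((α ^ 2 - a ^ 2) * w₂ + 2 * a * α * w₁) / α ^ 2,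
        -((α ^ 2 - a ^ 2) * w₁ - 2 * a * α * w₂) / α ^ 2] := by
  ext i
  fin_cases i <;> simp [NT, bk, Jm] <;> field_simp <;> ring

lemma NT_X_Z_eq_zero_iff {α a w₁ w₂ : ℝ} (hα : α ≠ 0) :
    NT α a w₁ w₂ ![1, 0, 0, 0] ![0, 0, 1, 0] = 0 ↔
      (α ^ 2 - a ^ 2) * w₁ = 2 * a * α * w₂ ∧ (α ^ 2 - a ^ 2) * w₂ = -(2 * a * α * w₁) := by
  simp [NT_X_Z hα, hα, sub_eq_zero, add_eq_zero_iff_eq_neg, and_comm,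
    eq_comm (a := 2 * a * α * w₂)]

theorem g17_integrable_iff (α a w₁ w₂ : ℝ) (hα : α ≠ 0) (ha : a ≠ 0) :
    ((∀ E F : Fin 4 → ℝ, NT α a w₁ w₂ E F = 0) ↔ (w₁ = 0 ∧ w₂ = 0)) ∧
    (((α ^ 2 - a ^ 2) * w₁ = 2 * a * α * w₂ ∧
        (α ^ 2 - a ^ 2) * w₂ = -(2 * a * α * w₁)) →
      w₁ = 0 ∧ w₂ = 0) := by
  have system_iff := sq_sub_sq_mul_eq_iff (a := a) (w₁ := w₁) (w₂ := w₂) hα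
  refine ⟨?_, system_iff.mp⟩
  calc (∀ E F : Fin 4 → ℝ, NT α a w₁ w₂ E F = 0)
      ↔ NT α a w₁ w₂ ![1, 0, 0, 0] ![0, 0, 1, 0] = 0 :=
        forall_NT_eq_zero_iff_NT_X_Z_eq_zero α a w₁ w₂
    _ ↔ (α ^ 2 - a ^ 2) * w₁ = 2 * a * α * w₂ ∧ (α ^ 2 - a ^ 2) * w₂ = -(2 * a * α * w₁) :=
        NT_X_Z_eq_zero_iff hα
    _ ↔ w₁ = 0 ∧ w₂ = 0 := system_iff

end
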